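/- arXiv:2207.09826 — 2 statements merged into one kernel-verified Lean document; each statement's English description precedes it below -/
import Mathlib

section
/- Degree criterion for hybrid graphs: let m, n : ℕ, V = Fin m × Fin n, and let (S_l, S_q) be a hybrid graph on V with hybrid Laplacian 𝓛 = L(S_l) + Q(S_q) and degree matrix D = D(S_l) + D(S_q). Suppose that 𝓛, regarded as a complex matrix, is separable; that the partial transpose graphs S_l^Γ and S_q^Γ have disjoint edge sets; and that the hybrid graph (S_l^Γ, S_q^Γ) satisfies the NOI condition or the COI condition. Then D = D(S_l^Γ) + D(S_q^Γ), i.e., the degree matrix of the hybrid graph equals the degree matrix of its partial transpose. -/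
open Matrix

-- Adjacency matrix of a simple graph, with real entries.
open scoped Classical in
noncomputable def adjM {V : Type*} [Fintype V] (G : SimpleGraph V) : Matrix V V ℝ :=
  Matrix.of fun u v => if G.Adj u v then 1 else 0

-- Degree matrix of a simple graph: diagonal, with the vertex degrees on the diagonal.
open scoped Classical in
noncomputable def degM {V : Type*} [Fintype V] [DecidableEq V] (G : SimpleGraph V) :
    Matrix V V ℝ :=
  Matrix.diagonal fun v => ∑ u, if G.Adj v u then (1 : ℝ) else 0

/-- Signed Laplacian `L = D - A`. -/
noncomputable def lapL {V : Type*} [Fintype V] [DecidableEq V] (G : SimpleGraph V) :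
    Matrix V V ℝ :=
  degM G - adjM G

/-- Signless Laplacian `Q = D + A`. -/
noncomputable def lapQ {V : Type*} [Fintype V] [DecidableEq V] (G : SimpleGraph V) :
    Matrix V V ℝ :=
  degM G + adjM G

/-- Partial transpose graph: `(i,j) ~ (k,l)` iff `(i,l) ~ (k,j)` in `G`. -/
def ptGraph {m n : ℕ} (G : SimpleGraph (Fin m × Fin n)) : SimpleGraph (Fin m × Fin n) where
  Adj p q := G.Adj (p.1, q.2) (q.1, p.2)
  symm := ⟨fun _ _ h => G.symm.symm _ _ h⟩
  loopless := ⟨fun p h => G.loopless.irrefl _ h⟩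

/-- The two subgraphs of a hybrid graph have disjoint edge sets. -/
def EdgeDisjoint {V : Type*} (Sl Sq : SimpleGraph V) : Prop :=
  ∀ u v, ¬ (Sl.Adj u v ∧ Sq.Adj u v)

/-- NOI condition: the `Q`-subgraph is bipartite and no vertex is incident both to an
`L`-edge and to a `Q`-edge. -/
def NOI {V : Type*} (Sl Sq : SimpleGraph V) : Prop :=
  (∃ c : V → Bool, ∀ u v, Sq.Adj u v → c u ≠ c v) ∧
  ∀ u, ¬ ((∃ x, Sl.Adj u x) ∧ (∃ x, Sq.Adj u x))

/-- COI condition: there is a coloring proper for the `Q`-subgraph such that every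
`L`-edge joins vertices of the same color. -/
def COI {V : Type*} (Sl Sq : SimpleGraph V) : Prop :=
  ∃ c : V → Bool, (∀ u v, Sq.Adj u v → c u ≠ c v) ∧ (∀ u v, Sl.Adj u v → c u = c v)

/-- Separability of a `V × V` complex matrix, `V = Fin m × Fin n`. -/
def MatrixIsSeparable {m n : ℕ} (ρ : Matrix (Fin m × Fin n) (Fin m × Fin n) ℂ) : Prop :=
  ∃ (T : Finset ℕ) (x : ℕ → Fin m → ℂ) (y : ℕ → Fin n → ℂ),
    ∀ (i k : Fin m) (j l : Fin n),
      ρ (i, j) (k, l) = ∑ t ∈ T, x t i * star (x t k) * (y t j * star (y t l))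

/-!
The partial transpose of a separable matrix is positive semidefinite. For the hybrid Laplacian
`𝓛 = D - A_l + A_q`, the partial transpose is `𝓛^Γ = (D - D^Γ) + K`, where `K` is the hybrid
Laplacian and `D^Γ` the degree matrix of the partial transpose graph. The COI condition, which NOI
implies, provides a `±1` vector `s` in the kernel of `K`. Hence `⟨s, 𝓛^Γ s⟩ = tr (D - D^Γ)`, which
vanishes because partial transposition only permutes the entries of the adjacency matrices. As
`𝓛^Γ` is positive semidefinite, `0 = 𝓛^Γ s = (D - D^Γ) s`, and `s` has no zero entry.
-/

open scoped ComplexOrder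

section PosSemidef

variable {V 𝕜 : Type*} [RCLike 𝕜]

theorem eq_zero_of_posSemidef_add_of_isDiag [Fintype V] {D N : Matrix V V 𝕜} {s : V → 𝕜}
    (hD : D.IsDiag) (htr : D.trace = 0) (hs : ∀ v, ‖s v‖ = 1) (hN : N *ᵥ s = 0)
    (hpsd : (D + N).PosSemidef) : D = 0 := by
  classical
  have hDs (v : V) : (D *ᵥ s) v = D v v * s v := by
    conv_lhs => rw [← hD.diagonal_diag, mulVec_diagonal, diag_apply]
  have hmul : (D + N) *ᵥ s = D *ᵥ s := by rw [add_mulVec, hN, add_zero]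
  have hform : star s ⬝ᵥ ((D + N) *ᵥ s) = 0 := calc
    star s ⬝ᵥ ((D + N) *ᵥ s) = ∑ v, D v v * (star (s v) * s v) := by
      rw [hmul]
      refine Finset.sum_congr rfl fun v _ => ?_
      rw [hDs, Pi.star_apply, mul_left_comm]
    _ = D.trace := by simp [← starRingEnd_apply, RCLike.conj_mul, hs, trace]
    _ = 0 := htr
  have hker : D *ᵥ s = 0 := hmul ▸ (hpsd.dotProduct_mulVec_zero_iff s).1 hform
  have hdiag (v : V) : D v v = 0 := by
    have hs_ne : s v ≠ 0 := norm_ne_zero_iff.1 (by simp [hs v])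
    have hDsv : D v v * s v = 0 := by rw [← hDs, hker, Pi.zero_apply]
    exact (mul_eq_zero.1 hDsv).resolve_right hs_ne
  rw [← hD.diagonal_diag, diagonal_eq_zero]
  exact funext hdiag

theorem posSemidef_of_map_ofReal {M : Matrix V V ℝ}
    (hM : (M.map fun a => (a : 𝕜)).PosSemidef) : M.PosSemidef := by
  refine ⟨?_, fun x => ?_⟩
  · ext u v
    simpa using hM.isHermitian.apply u v
  · have hx := hM.2 (x.mapRange (fun a : ℝ => (a : 𝕜)) RCLike.ofReal_zero)
    rw [← RCLike.ofReal_nonneg (K := 𝕜)]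
    simpa [Finsupp.sum, Finsupp.support_mapRange_of_injective _ _ RCLike.ofReal_injective] using hx

end PosSemidef

section PartialTranspose

variable {α β R S : Type*}

/-- The partial transpose `ρ^Γ` of a matrix `ρ` indexed by a product: transposition of the second
tensor factor only. -/
def partialTranspose (M : Matrix (α × β) (α × β) R) : Matrix (α × β) (α × β) R :=
  Matrix.of fun p q => M (p.1, q.2) (q.1, p.2)

theorem partialTranspose_apply (M : Matrix (α × β) (α × β) R) (p q : α × β) :
    partialTranspose M p q = M (p.1, q.2) (q.1, p.2) :=
  rfl

theorem partialTranspose_add [Add R] (M N : Matrix (α × β) (α × β) R) :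
    partialTranspose (M + N) = partialTranspose M + partialTranspose N :=
  rfl

theorem partialTranspose_sub [Sub R] (M N : Matrix (α × β) (α × β) R) :
    partialTranspose (M - N) = partialTranspose M - partialTranspose N :=
  rfl

theorem partialTranspose_map (M : Matrix (α × β) (α × β) R) (f : R → S) :
    partialTranspose (M.map f) = (partialTranspose M).map f :=
  rfl

theorem partialTranspose_eq_self_of_isDiag [Zero R] {D : Matrix (α × β) (α × β) R}
    (hD : D.IsDiag) : partialTranspose D = D := by
  ext ⟨i, j⟩ ⟨k, l⟩
  rw [partialTranspose_apply]
  by_cases hjl : j = l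
  · rw [hjl]
  · rw [hD fun h => hjl (Prod.ext_iff.1 h).2.symm, hD fun h => hjl (Prod.ext_iff.1 h).2]

theorem sum_partialTranspose [Fintype α] [Fintype β] [AddCommMonoid R]
    (M : Matrix (α × β) (α × β) R) :
    ∑ p, ∑ q, partialTranspose M p q = ∑ p, ∑ q, M p q := by
  simp only [Fintype.sum_prod_type, partialTranspose_apply]
  refine Finset.sum_congr rfl fun i _ => ?_
  rw [Finset.sum_comm_cycle]
  exact Finset.sum_congr rfl fun j _ => Finset.sum_comm

end PartialTranspose

theorem MatrixIsSeparable.posSemidef_partialTranspose {m n : ℕ}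
    {ρ : Matrix (Fin m × Fin n) (Fin m × Fin n) ℂ} (hρ : MatrixIsSeparable ρ) :
    (partialTranspose ρ).PosSemidef := by
  obtain ⟨T, x, y, hxy⟩ := hρ
  -- Transposing the factor `y yᴴ` replaces `y` by its entrywise conjugate.
  let z (t : ℕ) (p : Fin m × Fin n) : ℂ := x t p.1 * star (y t p.2)
  have hgram : partialTranspose ρ = ∑ t ∈ T, vecMulVec (z t) (star (z t)) := by
    ext p q
    rw [partialTranspose_apply, hxy, Matrix.sum_apply]
    refine Finset.sum_congr rfl fun t _ => ?_
    simp only [z, vecMulVec_apply, Pi.star_apply, star_mul', star_star]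
    ring
  rw [hgram]
  exact posSemidef_sum T fun t _ => posSemidef_vecMulVec_self_star (z t)

section Laplacian

variable {V : Type*} [Fintype V]

theorem adjM_mul_eq_zero {G : SimpleGraph V} {u v : V} {r : ℝ} (h : G.Adj u v → r = 0) :
    adjM G u v * r = 0 := by
  by_cases huv : G.Adj u v
  · rw [h huv, mul_zero]
  · simp [adjM, huv]

variable [DecidableEq V]

theorem degM_eq_diagonal_sum_adjM (G : SimpleGraph V) :
    degM G = diagonal fun v => ∑ u, adjM G v u :=
  rfl

theorem isDiag_degM (G : SimpleGraph V) : (degM G).IsDiag :=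
  isDiag_diagonal _

theorem trace_degM (G : SimpleGraph V) : (degM G).trace = ∑ v, ∑ u, adjM G v u :=
  trace_diagonal _

theorem degM_mulVec_apply (G : SimpleGraph V) (s : V → ℝ) (v : V) :
    (degM G *ᵥ s) v = ∑ u, adjM G v u * s v := by
  rw [degM_eq_diagonal_sum_adjM, mulVec_diagonal, Finset.sum_mul]

theorem lapL_mulVec_eq_zero {G : SimpleGraph V} {s : V → ℝ} (hs : ∀ u v, G.Adj u v → s u = s v) :
    lapL G *ᵥ s = 0 := by
  ext v
  rw [lapL, sub_mulVec, Pi.sub_apply, degM_mulVec_apply, mulVec, dotProduct,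
    ← Finset.sum_sub_distrib]
  refine Finset.sum_eq_zero fun u _ => ?_
  rw [← mul_sub]
  exact adjM_mul_eq_zero fun h => sub_eq_zero.2 (hs v u h)

theorem lapQ_mulVec_eq_zero {G : SimpleGraph V} {s : V → ℝ} (hs : ∀ u v, G.Adj u v → s u = -s v) :
    lapQ G *ᵥ s = 0 := by
  ext v
  rw [lapQ, add_mulVec, Pi.add_apply, degM_mulVec_apply, mulVec, dotProduct,
    ← Finset.sum_add_distrib]
  refine Finset.sum_eq_zero fun u _ => ?_
  rw [← mul_add]
  exact adjM_mul_eq_zero fun h => by rw [hs v u h, neg_add_cancel]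

end Laplacian

theorem NOI.coi {V : Type*} {Sl Sq : SimpleGraph V} (h : NOI Sl Sq) : COI Sl Sq := by
  classical
  obtain ⟨⟨c, hc⟩, hincident⟩ := h
  refine ⟨fun v => if ∃ x, Sq.Adj v x then c v else true, fun u v huv => ?_, fun u v huv => ?_⟩
  · have hu : ∃ x, Sq.Adj u x := ⟨v, huv⟩
    have hv : ∃ x, Sq.Adj v x := ⟨u, huv.symm⟩
    simpa only [if_pos hu, if_pos hv] using hc u v huv
  · have hu : ¬ ∃ x, Sq.Adj u x := fun h => hincident u ⟨⟨v, huv⟩, h⟩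
    have hv : ¬ ∃ x, Sq.Adj v x := fun h => hincident v ⟨⟨u, huv.symm⟩, h⟩
    simp only [if_neg hu, if_neg hv]

theorem COI.exists_norm_eq_one_mulVec_eq_zero {V : Type*} [Fintype V] [DecidableEq V]
    {Sl Sq : SimpleGraph V} (h : COI Sl Sq) :
    ∃ s : V → ℝ, (∀ v, ‖s v‖ = 1) ∧ (lapL Sl + lapQ Sq) *ᵥ s = 0 := by
  obtain ⟨c, hq, hl⟩ := h
  refine ⟨fun v => cond (c v) 1 (-1), fun v => by cases hv : c v <;> simp [hv], ?_⟩
  rw [add_mulVec, lapL_mulVec_eq_zero, lapQ_mulVec_eq_zero, add_zero]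
  · intro u v huv
    rw [Bool.eq_not_of_ne (hq u v huv)]
    cases c v <;> simp
  · intro u v huv
    rw [hl u v huv]

section PartialTransposeGraph

variable {m n : ℕ}

theorem adjM_ptGraph (G : SimpleGraph (Fin m × Fin n)) :
    adjM (ptGraph G) = partialTranspose (adjM G) :=
  rfl

theorem trace_degM_ptGraph (G : SimpleGraph (Fin m × Fin n)) :
    (degM (ptGraph G)).trace = (degM G).trace := by
  rw [trace_degM, trace_degM, adjM_ptGraph, sum_partialTranspose]

theorem partialTranspose_lapL (G : SimpleGraph (Fin m × Fin n)) :
    partialTranspose (lapL G) = degM G - degM (ptGraph G) + lapL (ptGraph G) := by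
  rw [lapL, lapL, partialTranspose_sub, partialTranspose_eq_self_of_isDiag (isDiag_degM G),
    adjM_ptGraph, sub_add_sub_cancel]

theorem partialTranspose_lapQ (G : SimpleGraph (Fin m × Fin n)) :
    partialTranspose (lapQ G) = degM G - degM (ptGraph G) + lapQ (ptGraph G) := by
  rw [lapQ, lapQ, partialTranspose_add, partialTranspose_eq_self_of_isDiag (isDiag_degM G),
    adjM_ptGraph, ← add_assoc, sub_add_cancel]

end PartialTransposeGraph

theorem degree_criterion_hybrid_general {m n : ℕ} {Sl Sq : SimpleGraph (Fin m × Fin n)}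
    (hppt : (partialTranspose (lapL Sl + lapQ Sq)).PosSemidef)
    (hΓ : COI (ptGraph Sl) (ptGraph Sq)) :
    degM Sl + degM Sq = degM (ptGraph Sl) + degM (ptGraph Sq) := by
  obtain ⟨s, hs, hker⟩ := hΓ.exists_norm_eq_one_mulVec_eq_zero
  have hdiag : (degM Sl + degM Sq - (degM (ptGraph Sl) + degM (ptGraph Sq))).IsDiag :=
    ((isDiag_degM _).add (isDiag_degM _)).sub ((isDiag_degM _).add (isDiag_degM _))
  have htrace : (degM Sl + degM Sq - (degM (ptGraph Sl) + degM (ptGraph Sq))).trace = 0 := by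
    simp only [trace_sub, trace_add, trace_degM_ptGraph, sub_self]
  have hsplit : partialTranspose (lapL Sl + lapQ Sq) =
      degM Sl + degM Sq - (degM (ptGraph Sl) + degM (ptGraph Sq)) +
        (lapL (ptGraph Sl) + lapQ (ptGraph Sq)) := by
    rw [partialTranspose_add, partialTranspose_lapL, partialTranspose_lapQ]
    abel
  exact sub_eq_zero.1 (eq_zero_of_posSemidef_add_of_isDiag hdiag htrace hs hker (hsplit ▸ hppt))

/-- Degree criterion for hybrid graphs: if the hybrid Laplacian of `(S_l, S_q)` is separable
and the partial transpose hybrid graph `(S_l^Γ, S_q^Γ)` (with disjoint edge sets) satisfies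
the NOI or the COI condition, then the degree matrix of the hybrid graph equals that of its
partial transpose. -/
theorem degree_criterion_hybrid (m n : ℕ) (Sl Sq : SimpleGraph (Fin m × Fin n))
    (hdisj : EdgeDisjoint Sl Sq)
    (hsep : MatrixIsSeparable ((lapL Sl + lapQ Sq).map fun a => (a : ℂ)))
    (hdisjΓ : EdgeDisjoint (ptGraph Sl) (ptGraph Sq))
    (hΓ : NOI (ptGraph Sl) (ptGraph Sq) ∨ COI (ptGraph Sl) (ptGraph Sq)) :
    degM Sl + degM Sq = degM (ptGraph Sl) + degM (ptGraph Sq) := by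
  exact degree_criterion_hybrid_general
    (posSemidef_of_map_ofReal (partialTranspose_map _ _ ▸ hsep.posSemidef_partialTranspose))
    (hΓ.elim NOI.coi id)
end

section
/- Every COI hybrid graph has a proxy NOI hybrid graph with the same kernel: if (S_l, S_q) is a hybrid graph on a finite vertex type V satisfying the COI condition, then there exists a hybrid graph (S_l', S_q') on V satisfying the NOI condition such that the kernels of the hybrid Laplacians coincide, i.e., for every x : V → ℝ, (L(S_l') + Q(S_q'))·x = 0 ↔ (L(S_l) + Q(S_q))·x = 0. -/
open Matrix

/-!
Let `c` be a coloring witnessing COI and let `σ = ±1` be the sign vector of its two color classes.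
Conjugation by `diagonal σ` (switching) flips the off-diagonal sign exactly on the `Q`-edges, so it
turns the hybrid Laplacian into the ordinary Laplacian of `Sl ⊔ Sq`. Hence the kernel consists of
the `x` such that `σ * x` is constant on connected components, and depends only on `c` and the
components. To get an NOI graph with the same components and the same `c`, keep the monochromatic
components as they are and replace every other component by the complete bipartite `Q`-graph
between its two color classes.
-/

/-- `c` is a coloring witnessing that the hybrid graph `(Sl, Sq)` satisfies the COI condition; it is
named separately from `COI` so that two hybrid graphs can share one coloring. -/
structure IsCOIColoring {V : Type*} (Sl Sq : SimpleGraph V) (c : V → Bool) : Prop where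
  ne_of_adj : ∀ u v, Sq.Adj u v → c u ≠ c v
  eq_of_adj : ∀ u v, Sl.Adj u v → c u = c v

theorem IsCOIColoring.edgeDisjoint {V : Type*} {Sl Sq : SimpleGraph V} {c : V → Bool}
    (hc : IsCOIColoring Sl Sq c) : EdgeDisjoint Sl Sq :=
  fun u v ⟨hl, hq⟩ => hc.ne_of_adj u v hq (hc.eq_of_adj u v hl)

/-- The sign `±1` of a color, the entry of the switching matrix at a vertex of that color. -/
def colorSign (b : Bool) : ℝ := if b then 1 else -1

theorem colorSign_mul_self (b : Bool) : colorSign b * colorSign b = 1 := by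
  cases b <;> simp [colorSign]

theorem colorSign_mul_of_ne {a b : Bool} (h : a ≠ b) : colorSign a * colorSign b = -1 := by
  cases a <;> cases b <;> simp_all [colorSign]

theorem colorSign_ne_zero (b : Bool) : colorSign b ≠ 0 :=
  left_ne_zero_of_mul_eq_one (colorSign_mul_self b)

section Kernel

variable {V : Type*} [Fintype V] [DecidableEq V] {Sl Sq : SimpleGraph V} {c : V → Bool}

open scoped Classical in
theorem lapL_eq_lapMatrix (G : SimpleGraph V) : lapL G = G.lapMatrix ℝ := by
  have degM_eq : degM G = G.degMatrix ℝ := by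
    simp only [degM, SimpleGraph.degMatrix, SimpleGraph.degree_eq_sum_if_adj]
  have adjM_eq : adjM G = G.adjMatrix ℝ := rfl
  rw [lapL, SimpleGraph.lapMatrix, degM_eq, adjM_eq]

theorem EdgeDisjoint.degM_sup (h : EdgeDisjoint Sl Sq) :
    degM (Sl ⊔ Sq) = degM Sl + degM Sq := by
  simp only [degM, diagonal_add, ← Finset.sum_add_distrib, SimpleGraph.sup_adj]
  congr! 3 with u v
  have := h u v
  split_ifs <;> simp_all

theorem diagonal_conj_degM (G : SimpleGraph V) (c : V → Bool) :
    diagonal (colorSign ∘ c) * degM G * diagonal (colorSign ∘ c) = degM G := by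
  simp only [degM, diagonal_mul_diagonal, Function.comp_apply]
  congr! 2 with u
  rw [mul_right_comm, colorSign_mul_self, one_mul]

theorem IsCOIColoring.diagonal_conj_adjM_sup (hc : IsCOIColoring Sl Sq c) :
    diagonal (colorSign ∘ c) * adjM (Sl ⊔ Sq) * diagonal (colorSign ∘ c) = adjM Sl - adjM Sq := by
  ext u v
  simp only [adjM, mul_diagonal, diagonal_mul, Function.comp_apply, of_apply,
    Matrix.sub_apply, SimpleGraph.sup_adj]
  by_cases hl : Sl.Adj u v
  · have hq : ¬Sq.Adj u v := fun hq => hc.edgeDisjoint u v ⟨hl, hq⟩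
    simp [hl, hq, hc.eq_of_adj u v hl, colorSign_mul_self]
  · by_cases hq : Sq.Adj u v
    · simp [hl, hq, colorSign_mul_of_ne (hc.ne_of_adj u v hq)]
    · simp [hl, hq]

theorem IsCOIColoring.lapL_add_lapQ_eq_diagonal_conj (hc : IsCOIColoring Sl Sq c) :
    lapL Sl + lapQ Sq =
      diagonal (colorSign ∘ c) * lapL (Sl ⊔ Sq) * diagonal (colorSign ∘ c) := by
  rw [lapL, lapL, lapQ, mul_sub, sub_mul, diagonal_conj_degM, hc.diagonal_conj_adjM_sup,
    hc.edgeDisjoint.degM_sup]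
  abel

theorem IsCOIColoring.mulVec_eq_zero_iff_forall_reachable (hc : IsCOIColoring Sl Sq c) (x : V → ℝ) :
    (lapL Sl + lapQ Sq).mulVec x = 0 ↔
      ∀ u v, (Sl ⊔ Sq).Reachable u v → colorSign (c u) * x u = colorSign (c v) * x v := by
  classical
  have switch : (lapL Sl + lapQ Sq).mulVec x = 0 ↔
      (lapL (Sl ⊔ Sq)).mulVec (fun v => colorSign (c v) * x v) = 0 := by
    have diagonal_mulVec (y : V → ℝ) :
        diagonal (colorSign ∘ c) *ᵥ y = fun v => colorSign (c v) * y v :=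
      funext fun v => mulVec_diagonal _ _ v
    rw [hc.lapL_add_lapQ_eq_diagonal_conj, ← mulVec_mulVec, ← mulVec_mulVec, diagonal_mulVec,
      diagonal_mulVec]
    simp [funext_iff, colorSign_ne_zero]
  rw [switch, lapL_eq_lapMatrix, SimpleGraph.lapMatrix_mulVec_eq_zero_iff_forall_reachable]

theorem IsCOIColoring.mulVec_eq_zero_iff_of_reachable_eq
    {Sl' Sq' : SimpleGraph V} (hc' : IsCOIColoring Sl' Sq' c) (hc : IsCOIColoring Sl Sq c)
    (hreach : (Sl' ⊔ Sq').Reachable = (Sl ⊔ Sq).Reachable) (x : V → ℝ) :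
    (lapL Sl' + lapQ Sq').mulVec x = 0 ↔ (lapL Sl + lapQ Sq).mulVec x = 0 := by
  rw [hc'.mulVec_eq_zero_iff_forall_reachable, hc.mulVec_eq_zero_iff_forall_reachable, hreach]

end Kernel

section Proxy

variable {V α : Type*}

/-- The graph of those edges of `G` whose connected component is monochromatic under `c`: the
`L`-part of the proxy. -/
def proxyL (G : SimpleGraph V) (c : V → α) : SimpleGraph V where
  Adj u v := G.Adj u v ∧ ∀ w, G.Reachable u w → c u = c w
  symm := ⟨fun _ _ ⟨huv, hu⟩ =>
    ⟨huv.symm, fun w hvw => (hu _ huv.reachable).symm.trans (hu w (huv.reachable.trans hvw))⟩⟩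
  loopless := ⟨fun _ h => G.irrefl h.1⟩

/-- The graph joining any two vertices of different colors in the same connected component of `G`:
the `Q`-part of the proxy. -/
def proxyQ (G : SimpleGraph V) (c : V → α) : SimpleGraph V where
  Adj u v := G.Reachable u v ∧ c u ≠ c v
  symm := ⟨fun _ _ h => ⟨h.1.symm, h.2.symm⟩⟩
  loopless := ⟨fun _ h => h.2 rfl⟩

theorem isCOIColoring_proxyL_proxyQ (G : SimpleGraph V) (c : V → Bool) :
    IsCOIColoring (proxyL G c) (proxyQ G c) c where
  ne_of_adj _ _ h := h.2
  eq_of_adj _ v h := h.2 v h.1.reachable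

theorem noi_proxyL_proxyQ (G : SimpleGraph V) (c : V → Bool) :
    NOI (proxyL G c) (proxyQ G c) :=
  ⟨⟨c, (isCOIColoring_proxyL_proxyQ G c).ne_of_adj⟩,
    fun _ ⟨⟨_, hmono⟩, ⟨w, hcross⟩⟩ => hcross.2 (hmono.2 w hcross.1)⟩

theorem reachable_le_of_adj_le_reachable {G H : SimpleGraph V} (h : G.Adj ≤ H.Reachable) :
    G.Reachable ≤ H.Reachable := by
  rw [SimpleGraph.reachable_eq_reflTransGen] at h
  simpa only [SimpleGraph.reachable_eq_reflTransGen] using Relation.reflTransGen_closed h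

theorem reachable_proxyL_sup_proxyQ_of_adj {G : SimpleGraph V} (c : V → α) {u v : V}
    (huv : G.Adj u v) :
    (proxyL G c ⊔ proxyQ G c).Reachable u v := by
  have reachable_of_ne {a b : V} (hab : G.Reachable a b) (hne : c a ≠ c b) :
      (proxyL G c ⊔ proxyQ G c).Reachable a b :=
    SimpleGraph.Adj.reachable (Or.inr ⟨hab, hne⟩)
  by_cases hmono : ∀ w, G.Reachable u w → c u = c w
  · exact SimpleGraph.Adj.reachable (Or.inl ⟨huv, hmono⟩)
  by_cases hcolor : c u = c v
  -- Two vertices of the same color are joined through a vertex of another color.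
  · push Not at hmono
    obtain ⟨w, huw, hne⟩ := hmono
    exact (reachable_of_ne huw hne).trans
      (reachable_of_ne (huw.symm.trans huv.reachable) (hcolor ▸ hne.symm))
  · exact reachable_of_ne huv.reachable hcolor

theorem reachable_proxyL_sup_proxyQ (G : SimpleGraph V) (c : V → α) :
    (proxyL G c ⊔ proxyQ G c).Reachable = G.Reachable := by
  apply le_antisymm
  · refine reachable_le_of_adj_le_reachable fun u v huv => ?_
    rcases huv with hmono | hcross
    · exact hmono.1.reachable
    · exact hcross.1
  · exact reachable_le_of_adj_le_reachable fun u v huv => reachable_proxyL_sup_proxyQ_of_adj c huv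

end Proxy

/-- Every COI hybrid graph has a proxy NOI hybrid graph whose hybrid Laplacian has the same
kernel. -/
theorem coi_has_noi_proxy {V : Type*} [Fintype V] [DecidableEq V]
    (Sl Sq : SimpleGraph V) (hdisj : EdgeDisjoint Sl Sq) (hcoi : COI Sl Sq) :
    ∃ Sl' Sq' : SimpleGraph V, EdgeDisjoint Sl' Sq' ∧ NOI Sl' Sq' ∧
      ∀ x : V → ℝ,
        (lapL Sl' + lapQ Sq').mulVec x = 0 ↔ (lapL Sl + lapQ Sq).mulVec x = 0 := by
  obtain ⟨c, hq, hl⟩ := hcoi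
  have hc : IsCOIColoring Sl Sq c := ⟨hq, hl⟩
  have hproxy := isCOIColoring_proxyL_proxyQ (Sl ⊔ Sq) c
  exact ⟨proxyL (Sl ⊔ Sq) c, proxyQ (Sl ⊔ Sq) c, hproxy.edgeDisjoint,
    noi_proxyL_proxyQ (Sl ⊔ Sq) c,
    hproxy.mulVec_eq_zero_iff_of_reachable_eq hc (reachable_proxyL_sup_proxyQ (Sl ⊔ Sq) c)⟩
end
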